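/- Let p be a prime, n ≥ 1, and let L be a language extending the language of rings. For every L-formula φ of the form ∀x₁…∀x_r ∃y₁…∃yₛ ψ with ψ quantifier-free, there exists an L-formula φ' with the same free variables, of the form ∀w₁…∀w_{n+1} ∃y₁…∃y_{s'} ψ' with ψ' quantifier-free, such that: for every field K of characteristic p with [K : K^p] = pⁿ and every L-structure K' whose ring-language reduct is K, the formulas φ and φ' are equivalent in K' (they are satisfied by exactly the same assignments of their free variables). -/

import Mathlib

open FirstOrder Language

attribute [local instance] FirstOrder.Ring.compatibleRingOfRing

universe u v w

/-- Apply existential quantifiers to the last `s` bound variables of a bounded formula. -/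
def FirstOrder.Language.BoundedFormula.exsN {L : FirstOrder.Language} {α : Type*} {m : ℕ} :
    ∀ {s : ℕ}, L.BoundedFormula α (m + s) → L.BoundedFormula α m
  | 0, φ => φ
  | _ + 1, φ => φ.ex.exsN

/-- `a : Fin n → K` is a `p`-basis of the field `K` of characteristic `p`: every element of `K`
is, in a unique way, a linear combination of the monomials `a₁^e₁ ⋯ aₙ^eₙ` (with `0 ≤ eᵢ < p`)
with coefficients in the subfield `K^p` of `p`-th powers.  A field of characteristic `p` has an
`n`-element `p`-basis iff `[K : K^p] = pⁿ`. -/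
def IsPBasis (p : ℕ) {n : ℕ} {K : Type*} [Field K] (a : Fin n → K) : Prop :=
  ∀ x : K, ∃! c : (Fin n → Fin p) → K,
    x = ∑ e : Fin n → Fin p, (c e) ^ p * ∏ i : Fin n, (a i) ^ (e i : ℕ)

/-!
Given a `p`-basis `a`, every `w` in `K` is `∑ₑ cₑ ^ p * aᵉ` for a unique tuple `c` of `pⁿ ≥ 2`
elements of `K`. So `w` codes a pair of entries of `c`, and iterating on one of them makes `w` code
an `r`-tuple: `∀ x₁ … x_r` becomes `∀ w`. The coding is existential in `a` and `w`. It remains to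
quantify over `a`: no formula picks out a `p`-basis, but any `n`-tuple is either `p`-dependent, an
existential condition that excuses it, or, by counting dimensions over `K^p`, a `p`-basis.
Hence `n + 1` universal quantifiers, over `a` and `w`, suffice.
-/

section IteratedCoding

variable {X E : Type*} {G : (E → X) → X} {i j : E} {r : ℕ}

/-- Iterated coding of `r`-tuples by single elements, where `G` codes an `E`-indexed tuple: `w` is a
code of `x₀, …, x_{r-1}` if it codes a tuple with `x₀` in position `i` and, in position `j`, a code
of `x₁, …, x_{r-1}`. Every element is a code of the empty tuple. -/
def IsCode (G : (E → X) → X) (i j : E) : {r : ℕ} → X → (Fin r → X) → Prop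
  | 0, _, _ => True
  | _ + 1, w, x => ∃ c, G c = w ∧ c i = x 0 ∧ IsCode G i j (c j) (Fin.tail x)

theorem exists_isCode_of_ne [Nonempty X] (G : (E → X) → X) (hij : i ≠ j) (x : Fin r → X) :
    ∃ w, IsCode G i j w x := by
  classical
  induction r with
  | zero => exact ⟨Classical.arbitrary X, trivial⟩
  | succ r ih =>
    obtain ⟨w, hw⟩ := ih (Fin.tail x)
    let c : E → X := Function.update (fun _ => w) i (x 0)
    have hcj : c j = w := Function.update_of_ne hij.symm ..
    exact ⟨G c, c, rfl, Function.update_self .., by rwa [hcj]⟩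

theorem exists_isCode_of_surjective (hG : G.Surjective) (i j : E) (r : ℕ) (w : X) :
    ∃ x : Fin r → X, IsCode G i j w x := by
  induction r generalizing w with
  | zero => exact ⟨Fin.elim0, trivial⟩
  | succ r ih =>
    obtain ⟨c, hc⟩ := hG w
    obtain ⟨x, hx⟩ := ih (c j)
    exact ⟨Fin.cons (c i) x, c, hc, rfl, hx⟩

theorem IsCode.eq_of_injective (hG : G.Injective) {w : X} {x x' : Fin r → X}
    (hx : IsCode G i j w x) (hx' : IsCode G i j w x') : x = x' := by
  induction r generalizing w with
  | zero => exact Subsingleton.elim _ _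
  | succ r ih =>
    obtain ⟨c, hc, hi, hj⟩ := hx
    obtain ⟨c', hc', hi', hj'⟩ := hx'
    obtain rfl : c = c' := hG (hc.trans hc'.symm)
    rw [← Fin.cons_self_tail x, ← Fin.cons_self_tail x', ← hi, ← hi', ih hj hj']

end IteratedCoding

/-- The combination `∑ₑ cₑ ^ p * a₁ ^ e₁ ⋯ aₙ ^ eₙ` of the monomials in `a` with exponents below
`p`. In a field of characteristic `p`, the tuple `a` is `p`-independent when this is injective in
`c`, and a `p`-basis when it is bijective in `c`. -/
def pCombination (p : ℕ) {n : ℕ} {R : Type*} [CommSemiring R] (a : Fin n → R)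
    (c : (Fin n → Fin p) → R) : R :=
  ∑ e, c e ^ p * ∏ i, a i ^ (e i : ℕ)

theorem map_pCombination {p n : ℕ} {R S : Type*} [CommSemiring R] [CommSemiring S] (f : R →+* S)
    (a : Fin n → R) (c : (Fin n → Fin p) → R) :
    f (pCombination p a c) = pCombination p (f ∘ a) (f ∘ c) := by
  simp [pCombination]

section PBasis

variable {p n r : ℕ} {K : Type*} [Field K] {a b : Fin n → K} {i j : Fin n → Fin p}

theorem isPBasis_iff_bijective : IsPBasis p b ↔ (pCombination p b).Bijective := by
  simp only [IsPBasis, Function.bijective_iff_existsUnique, pCombination, eq_comm]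

theorem bijective_pCombination_of_injective [ExpChar K p] (hb : (pCombination p b).Bijective)
    (ha : (pCombination p a).Injective) : (pCombination p a).Bijective := by
  -- `pCombination p a` is `K^p`-linear once the coefficients are replaced by their `p`-th powers.
  let F : ((Fin n → Fin p) → K) ≃ ((Fin n → Fin p) → (frobenius K p).fieldRange) :=
    (Equiv.refl _).arrowCongr (frobenius K p).rangeRestrictFieldEquiv.toEquiv
  let T (a : Fin n → K) : ((Fin n → Fin p) → (frobenius K p).fieldRange) →ₗ[_] K :=
    Fintype.linearCombination _ fun e => ∏ i, a i ^ (e i : ℕ)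
  have pCombination_eq (a : Fin n → K) : pCombination p a = T a ∘ F := rfl
  simp only [pCombination_eq, F.bijective_comp, F.injective_comp] at ha hb ⊢
  let T_b := LinearEquiv.ofBijective (T b) hb
  have := T_b.finiteDimensional
  exact ⟨ha, (LinearMap.injective_iff_surjective_of_finrank_eq_finrank T_b.finrank_eq).1 ha⟩

theorem IsPBasis.forall_iff_forall_isCode [ExpChar K p] (hb : IsPBasis p b) (hij : i ≠ j)
    (Q : (Fin r → K) → Prop) :
    (∀ x, Q x) ↔ ∀ t : Fin (n + 1) → K, ¬ (pCombination p (Fin.init t)).Injective ∨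
      ∃ x, IsCode (pCombination p (Fin.init t)) i j (t (Fin.last n)) x ∧ Q x := by
  rw [isPBasis_iff_bijective] at hb
  refine ⟨fun hQ t => or_iff_not_imp_left.2 fun ht => ?_, fun h x => ?_⟩
  · have ht := bijective_pCombination_of_injective hb (not_not.1 ht)
    obtain ⟨x, hx⟩ := exists_isCode_of_surjective ht.surjective i j r (t (Fin.last n))
    exact ⟨x, hx, hQ x⟩
  · obtain ⟨w, hw⟩ := exists_isCode_of_ne (pCombination p b) hij x
    obtain ⟨x', hx', hQ⟩ :=
      (h (Fin.snoc b w)).resolve_left (not_not.2 (by simpa using hb.injective))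
    simp only [Fin.init_snoc, Fin.snoc_last] at hx'
    rwa [hw.eq_of_injective hb.injective hx']

end PBasis

theorem comp_finAppend {X Y : Type*} {m k : ℕ} (f : X → Y) (xs : Fin m → X) (ys : Fin k → X) :
    f ∘ Fin.append xs ys = Fin.append (f ∘ xs) (f ∘ ys) := by
  ext k
  cases k using Fin.addCases <;> simp

section Definability

variable {L : FirstOrder.Language.{v, w}}

theorem realize_exsN {α : Type*} {M : Type*} [L.Structure M] {m s : ℕ}
    (φ : L.BoundedFormula α (m + s)) (v : α → M) (xs : Fin m → M) :
    φ.exsN.Realize v xs ↔ ∃ ys : Fin s → M, φ.Realize v (Fin.append xs ys) := by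
  induction s with
  | zero => simp [BoundedFormula.exsN, Unique.exists_iff, Fin.append_right_nil]
  | succ s ih =>
    simp only [BoundedFormula.exsN, ih, BoundedFormula.realize_ex, ← Fin.append_snoc]
    exact ⟨fun ⟨ys, y, h⟩ => ⟨Fin.snoc ys y, h⟩,
      fun ⟨ys, h⟩ => ⟨Fin.init ys, ys (Fin.last s), by rwa [Fin.snoc_init_self]⟩⟩

theorem isQF_relabel {β γ : Type*} {φ : L.Formula β} (hφ : φ.IsQF) (g : β → γ) :
    (φ.relabel g).IsQF :=
  BoundedFormula.IsQF.relabel hφ _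

theorem isQF_toFormula {α : Type*} {m : ℕ} {φ : L.BoundedFormula α m} (hφ : φ.IsQF) :
    φ.toFormula.IsQF := by
  induction hφ with
  | falsum => exact .falsum
  | of_isAtomic h =>
    cases h with
    | equal t₁ t₂ => exact (BoundedFormula.IsAtomic.equal _ _).isQF
    | rel R ts => exact (BoundedFormula.IsAtomic.rel _ _).isQF
  | imp _ _ ih₁ ih₂ => exact ih₁.imp ih₂

theorem isQF_iInf {α κ : Type*} [Finite κ] {m : ℕ} {φ : κ → L.BoundedFormula α m}
    (hφ : ∀ k, (φ k).IsQF) : (BoundedFormula.iInf φ).IsQF := by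
  unfold BoundedFormula.iInf
  dsimp only
  generalize Finset.toList _ = l
  induction l with
  | nil => exact .top
  | cons k l ih => exact (hφ k).inf ih

/-- A relation `P` on tuples `β → K`, given for every field `K` with an `L`-structure, is
existentially definable if one formula `∃ y, φ` with `φ` quantifier-free defines it in all fields
whose `L`-structure expands, via `ι`, the ring structure. The variables are the free variables of a
formula over `β ⊕ γ`, those in the finite type `γ` being the quantified ones. -/
def ExistentiallyDefinable (ι : Language.ring →ᴸ L) {β : Type*}
    (P : ∀ (K : Type u) [Field K] [L.Structure K], (β → K) → Prop) : Prop :=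
  ∃ (γ : Type) (_ : Finite γ) (φ : L.Formula (β ⊕ γ)), φ.IsQF ∧
    ∀ (K : Type u) [Field K] [L.Structure K] [ι.IsExpansionOn K] (v : β → K),
      P K v ↔ ∃ y : γ → K, φ.Realize (Sum.elim v y)

namespace ExistentiallyDefinable

variable {ι : Language.ring →ᴸ L} {β : Type*}
  {P Q : ∀ (K : Type u) [Field K] [L.Structure K], (β → K) → Prop}

protected theorem congr (hP : ExistentiallyDefinable ι P)
    (h : ∀ (K : Type u) [Field K] [L.Structure K] [ι.IsExpansionOn K] (v : β → K),
      P K v ↔ Q K v) : ExistentiallyDefinable ι Q := by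
  obtain ⟨γ, hγ, φ, hφ, hP⟩ := hP
  exact ⟨γ, hγ, φ, hφ, fun K _ _ _ v => (h K v).symm.trans (hP K v)⟩

theorem realize_formula {φ : L.Formula β} (hφ : φ.IsQF) :
    ExistentiallyDefinable.{u} ι fun _ _ _ v => φ.Realize v :=
  ⟨Empty, inferInstance, φ.relabel Sum.inl, isQF_relabel hφ _, fun K _ _ _ v => by
    simp [Formula.realize_relabel]⟩

protected theorem and (hP : ExistentiallyDefinable ι P) (hQ : ExistentiallyDefinable ι Q) :
    ExistentiallyDefinable ι fun K _ _ v => P K v ∧ Q K v := by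
  obtain ⟨γ, _, φ, hφ, hP⟩ := hP
  obtain ⟨δ, _, χ, hχ, hQ⟩ := hQ
  refine ⟨γ ⊕ δ, inferInstance,
    φ.relabel (Sum.map id Sum.inl) ⊓ χ.relabel (Sum.map id Sum.inr),
    (isQF_relabel hφ _).inf (isQF_relabel hχ _), fun K _ _ _ v => ?_⟩
  simp only [hP, hQ, Formula.realize_inf, Formula.realize_relabel, Sum.elim_comp_map,
    Function.comp_id]
  exact ⟨fun ⟨⟨y, hy⟩, z, hz⟩ => ⟨Sum.elim y z, hy, hz⟩,
    fun ⟨y, hy, hz⟩ => ⟨⟨_, hy⟩, _, hz⟩⟩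

protected theorem or (hP : ExistentiallyDefinable ι P) (hQ : ExistentiallyDefinable ι Q) :
    ExistentiallyDefinable ι fun K _ _ v => P K v ∨ Q K v := by
  obtain ⟨γ, _, φ, hφ, hP⟩ := hP
  obtain ⟨δ, _, χ, hχ, hQ⟩ := hQ
  refine ⟨γ ⊕ δ, inferInstance,
    φ.relabel (Sum.map id Sum.inl) ⊔ χ.relabel (Sum.map id Sum.inr),
    (isQF_relabel hφ _).sup (isQF_relabel hχ _), fun K _ _ _ v => ?_⟩
  simp only [hP, hQ, Formula.realize_sup, Formula.realize_relabel, Sum.elim_comp_map,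
    Function.comp_id]
  constructor
  · rintro (⟨y, hy⟩ | ⟨z, hz⟩)
    · exact ⟨Sum.elim y 0, Or.inl hy⟩
    · exact ⟨Sum.elim 0 z, Or.inr hz⟩
  · rintro ⟨y, hy | hz⟩
    · exact Or.inl ⟨_, hy⟩
    · exact Or.inr ⟨_, hz⟩

theorem exists_tuple {δ : Type} [Finite δ]
    {R : ∀ (K : Type u) [Field K] [L.Structure K], (β → K) → (δ → K) → Prop}
    (hR : ExistentiallyDefinable ι fun K _ _ (v : β ⊕ δ → K) =>
      R K (v ∘ Sum.inl) (v ∘ Sum.inr)) :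
    ExistentiallyDefinable ι fun K _ _ v => ∃ x : δ → K, R K v x := by
  obtain ⟨γ, _, φ, hφ, hR⟩ := hR
  refine ⟨δ ⊕ γ, inferInstance, φ.relabel (Equiv.sumAssoc β δ γ), isQF_relabel hφ _,
    fun K _ _ _ v => ?_⟩
  have elim_assoc (x : δ → K) (y : γ → K) :
      Sum.elim v (Sum.elim x y) ∘ Equiv.sumAssoc β δ γ = Sum.elim (Sum.elim v x) y := by
    ext ((_ | _) | _) <;> rfl
  simp only [Formula.realize_relabel]
  constructor
  · rintro ⟨x, hx⟩
    obtain ⟨y, hy⟩ := (hR K (Sum.elim v x)).1 hx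
    exact ⟨Sum.elim x y, by rwa [elim_assoc]⟩
  · rintro ⟨xy, hxy⟩
    rw [← Sum.elim_comp_inl_inr xy, elim_assoc] at hxy
    exact ⟨_, (hR K (Sum.elim v (xy ∘ Sum.inl))).2 ⟨_, hxy⟩⟩

theorem realize_boundedFormula {α : Type*} {m : ℕ} {φ : L.BoundedFormula α m} (hφ : φ.IsQF)
    (f : α → β) (g : Fin m → β) :
    ExistentiallyDefinable.{u} ι fun _ _ _ v => φ.Realize (v ∘ f) (v ∘ g) := by
  simpa [Formula.realize_relabel, BoundedFormula.realize_toFormula, Function.comp_assoc] using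
    realize_formula (ι := ι) (isQF_relabel (isQF_toFormula hφ) (Sum.elim f g))

theorem lift_eq_lift (q₁ q₂ : FreeCommRing β) :
    ExistentiallyDefinable.{u} ι fun _ _ _ v =>
      FreeCommRing.lift v q₁ = FreeCommRing.lift v q₂ := by
  let t (q : FreeCommRing β) : L.Term β := ι.onTerm (FirstOrder.Ring.termOfFreeCommRing q)
  have h : ((t q₁).equal (t q₂)).IsQF := (BoundedFormula.IsAtomic.equal _ _).isQF
  exact (realize_formula h).congr fun K _ _ _ v => by simp [t]

theorem comp_ne_comp {κ : Type*} [Finite κ] (f g : κ → β) :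
    ExistentiallyDefinable.{u} ι fun _ _ _ v => v ∘ f ≠ v ∘ g := by
  have h : (Formula.iInf fun k => (Term.var (f k)).equal (Term.var (g k)) : L.Formula β).not.IsQF :=
    (isQF_iInf fun k => (BoundedFormula.IsAtomic.equal _ _).isQF).not
  simpa [funext_iff] using realize_formula (ι := ι) h

variable {p n : ℕ}

theorem apply_eq_apply (k l : β) :
    ExistentiallyDefinable.{u} ι fun _ _ _ v => v k = v l := by
  simpa using lift_eq_lift (ι := ι) (.of k) (.of l)

theorem pCombination_eq (a : Fin n → β) (c : (Fin n → Fin p) → β) (w : β) :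
    ExistentiallyDefinable.{u} ι fun _ _ _ v => pCombination p (v ∘ a) (v ∘ c) = v w := by
  simpa [map_pCombination, Function.comp_def] using lift_eq_lift (ι := ι)
    (pCombination p (FreeCommRing.of ∘ a) (FreeCommRing.of ∘ c)) (.of w)

theorem pCombination_eq_pCombination (a : Fin n → β) (c c' : (Fin n → Fin p) → β) :
    ExistentiallyDefinable.{u} ι fun _ _ _ v =>
      pCombination p (v ∘ a) (v ∘ c) = pCombination p (v ∘ a) (v ∘ c') := by
  simpa [map_pCombination, Function.comp_def] using lift_eq_lift (ι := ι)
    (pCombination p (FreeCommRing.of ∘ a) (FreeCommRing.of ∘ c))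
    (pCombination p (FreeCommRing.of ∘ a) (FreeCommRing.of ∘ c'))

theorem not_injective_pCombination (a : Fin n → β) :
    ExistentiallyDefinable.{u} ι fun _ _ _ v => ¬ (pCombination p (v ∘ a)).Injective := by
  simp only [Function.not_injective_iff]
  exact exists_tuple <| exists_tuple <|
    (pCombination_eq_pCombination (Sum.inl ∘ Sum.inl ∘ a) (Sum.inl ∘ Sum.inr) Sum.inr).and <|
      comp_ne_comp (Sum.inl ∘ Sum.inr) Sum.inr

theorem isCode (a : Fin n → β) (i j : Fin n → Fin p) {r : ℕ} (w : β)
    (x : Fin r → β) :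
    ExistentiallyDefinable.{u} ι fun _ _ _ v =>
      IsCode (pCombination p (v ∘ a)) i j (v w) (v ∘ x) := by
  induction r generalizing β with
  | zero => simpa [IsCode] using realize_formula (ι := ι) (φ := (⊤ : L.Formula β)) .top
  | succ r ih =>
    exact exists_tuple <| (pCombination_eq (Sum.inl ∘ a) Sum.inr (Sum.inl w)).and <|
      (apply_eq_apply (Sum.inr i) (Sum.inl (x 0))).and <|
        ih (Sum.inl ∘ a) (Sum.inr j) (Sum.inl ∘ Fin.tail x)

theorem not_injective_or_exists_isCode {α : Type*} {r s : ℕ} {ψ : L.BoundedFormula α (r + s)}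
    (hψ : ψ.IsQF) (i j : Fin n → Fin p) :
    ExistentiallyDefinable.{u} ι fun K _ _ (v : α ⊕ Fin (n + 1) → K) =>
      ¬ (pCombination p (Fin.init (v ∘ Sum.inr))).Injective ∨
        ∃ x : Fin r → K,
          IsCode (pCombination p (Fin.init (v ∘ Sum.inr))) i j (v (Sum.inr (Fin.last n))) x ∧
          ∃ y : Fin s → K, ψ.Realize (v ∘ Sum.inl) (Fin.append x y) := by
  refine .or (not_injective_pCombination (Sum.inr ∘ Fin.castSucc)) <| .exists_tuple <|
    .and (isCode (Sum.inl ∘ Sum.inr ∘ Fin.castSucc) i j (Sum.inl (Sum.inr (Fin.last n))) Sum.inr) <|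
    .exists_tuple ?_
  simpa only [comp_finAppend, Function.comp_assoc] using
    realize_boundedFormula hψ (Sum.inl ∘ Sum.inl ∘ Sum.inl) (Fin.append (Sum.inl ∘ Sum.inr) Sum.inr)

theorem exists_isQF_exsN {α : Type*} {m : ℕ}
    {P : ∀ (K : Type u) [Field K] [L.Structure K], (α ⊕ Fin m → K) → Prop}
    (hP : ExistentiallyDefinable ι P) :
    ∃ (s : ℕ) (φ : L.BoundedFormula α (m + s)), φ.IsQF ∧
      ∀ (K : Type u) [Field K] [L.Structure K] [ι.IsExpansionOn K] (v : α → K) (xs : Fin m → K),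
        φ.exsN.Realize v xs ↔ P K (Sum.elim v xs) := by
  obtain ⟨γ, _, φ, hφ, hP⟩ := hP
  obtain ⟨s, ⟨e⟩⟩ := Finite.exists_equiv_fin γ
  let g : (α ⊕ Fin m) ⊕ γ → α ⊕ Fin (m + s) :=
    Sum.elim (Sum.map id (Fin.castAdd s)) (Sum.inr ∘ Fin.natAdd m ∘ e)
  let χ : L.BoundedFormula α (m + s) := BoundedFormula.relabel g φ
  refine ⟨s, χ, BoundedFormula.IsQF.relabel hφ g, fun K _ _ _ v xs => ?_⟩
  have append_comp (ys : Fin s → K) :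
      Sum.elim v (Fin.append xs ys) ∘ g = Sum.elim (Sum.elim v xs) (ys ∘ e) := by
    ext ((_ | _) | _) <;> simp [g]
  have realize_iff (ys : Fin s → K) :
      χ.Realize v (Fin.append xs ys) ↔ φ.Realize (Sum.elim (Sum.elim v xs) (ys ∘ e)) := by
    rw [BoundedFormula.realize_relabel, ← append_comp, Formula.Realize]
    exact iff_of_eq (congrArg _ (Subsingleton.elim _ _))
  rw [realize_exsN, hP]
  exact (e.symm.arrowCongr (.refl K)).exists_congr realize_iff

end ExistentiallyDefinable

end Definability

/-- let `p` be a prime, `n ≥ 1`, and `L` a language extending the language of rings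
(via `ι`).  For every `L`-formula of the form `∀ x₁ … x_r ∃ y₁ … yₛ ψ` (`ψ` quantifier-free)
there is an `L`-formula of the form `∀ w₁ … w_{n+1} ∃ y₁ … y_{s'} ψ'` (`ψ'` quantifier-free)
with the same free variables which is equivalent to it in every field `K` of characteristic `p`
with `[K : K^p] = pⁿ` (i.e. with an `n`-element `p`-basis), for every `L`-structure on `K`
expanding the ring structure. -/
theorem stmt8 (p : ℕ) (hp : p.Prime) (n : ℕ) (hn : 1 ≤ n)
    (L : FirstOrder.Language.{v, w}) (ι : Language.ring →ᴸ L)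
    (α : Type*) (r s : ℕ) (ψ : L.BoundedFormula α (r + s)) (hψ : ψ.IsQF) :
    ∃ (s' : ℕ) (ψ' : L.BoundedFormula α ((n + 1) + s')), ψ'.IsQF ∧
      ∀ (K : Type u) [Field K] [CharP K p] [L.Structure K] [ι.IsExpansionOn K],
        (∃ a : Fin n → K, IsPBasis p a) →
        ∀ v : α → K,
          (ψ.exsN.alls : L.Formula α).Realize v ↔ (ψ'.exsN.alls : L.Formula α).Realize v := by
  have : NeZero n := ⟨by lia⟩
  have : Nontrivial (Fin p) := Fin.nontrivial_iff_two_le.2 hp.two_le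
  obtain ⟨i, j, hij⟩ := exists_pair_ne (Fin n → Fin p)
  obtain ⟨s', ψ', hψ', realize_ψ'⟩ :=
    (ExistentiallyDefinable.not_injective_or_exists_isCode (ι := ι) hψ i j).exists_isQF_exsN
  refine ⟨s', ψ', hψ', fun K _ _ _ _ ⟨b, hb⟩ v => ?_⟩
  have : ExpChar K p := .prime hp
  simp only [BoundedFormula.realize_alls, realize_exsN ψ]
  rw [hb.forall_iff_forall_isCode hij]
  exact forall_congr' fun t => (realize_ψ' K v t).symm
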